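/- Let g ≥ 2 and b > 1 be integers with gcd(b,g) = 1, let a be a positive integer with gcd(a,b) = 1 and a < b^k, let j ≥ 1 and k ≥ c_g(b). Let t_0 = min{ t ≥ 1 : b^t ≡ 1 (mod g^j) } be the multiplicative order of b modulo g^j. Then for all s, s' ∈ {0,…,g^j−1}: ν_k(s) − ν_k(s') = ν_{k+t_0}(s) − ν_{k+t_0}(s') (as integers). -/

import Mathlib

/-- `ordg g m = min {n ≥ 1 : g^n ≡ 1 (mod m)}`, the multiplicative order of `g` modulo `m`. -/
noncomputable def ordg (g m : ℕ) : ℕ := sInf {n : ℕ | 0 < n ∧ g ^ n ≡ 1 [MOD m]}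

/-- `cg g b` is the least `c ≥ 1` such that `ord_g(b^{c+t}) = b^t·ord_g(b^c)` for all `t ≥ 1`. -/
noncomputable def cg (g b : ℕ) : ℕ :=
  sInf {c : ℕ | 0 < c ∧ ∀ t : ℕ, 0 < t → ordg g (b ^ (c + t)) = b ^ t * ordg g (b ^ c)}

/-- `nu g b a j k s` is the absolute frequency of the `j`-word `s` in the enlarged
repetend of `a/b^k`. -/
noncomputable def nu (g b a j k s : ℕ) : ℕ :=
  ((Finset.Icc j (ordg g (b ^ k) + j - 1)).filter
    (fun i => (a * g ^ i / b ^ k) % g ^ j = s)).card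

theorem ordg_eq_orderOf (g m : ℕ) : ordg g m = orderOf (g : ZMod m) := by
  have key (n : ℕ) : g ^ n ≡ 1 [MOD m] ↔ (g : ZMod m) ^ n = 1 := by
    rw [← ZMod.natCast_eq_natCast_iff]
    push_cast
    rfl
  rcases Nat.eq_zero_or_pos (orderOf (g : ZMod m)) with h | h
  · rw [h, ordg, Nat.sInf_eq_zero]
    right
    refine Set.eq_empty_of_forall_notMem fun n hn => ?_
    rw [orderOf_eq_zero_iff'] at h
    exact h n hn.1 ((key n).1 hn.2)
  · apply le_antisymm
    · exact Nat.sInf_le ⟨h, (key _).2 (pow_orderOf_eq_one _)⟩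
    · refine le_csInf ⟨_, h, (key _).2 (pow_orderOf_eq_one _)⟩ fun n hn => ?_
      exact orderOf_le_of_pow_eq_one hn.1 ((key n).1 hn.2)

theorem pow_modEq_pow_iff {g m : ℕ} (h : Nat.Coprime g m) (i i' : ℕ) :
    g ^ i ≡ g ^ i' [MOD m] ↔ i ≡ i' [MOD ordg g m] := by
  rw [ordg_eq_orderOf, ← ZMod.coe_unitOfCoprime g h, orderOf_units, ← pow_eq_pow_iff_modEq,
    ← ZMod.natCast_eq_natCast_iff]
  push_cast
  rw [← Units.val_inj, Units.val_pow_eq_pow_val, Units.val_pow_eq_pow_val,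
    ZMod.coe_unitOfCoprime]

theorem ordg_pos {g m : ℕ} (hm : 0 < m) (h : Nat.Coprime g m) : 0 < ordg g m := by
  have : NeZero m := ⟨hm.ne'⟩
  rw [ordg_eq_orderOf, ← ZMod.coe_unitOfCoprime g h, orderOf_units]
  exact orderOf_pos _

theorem pow_ordg_modEq_one {g m : ℕ} (h : Nat.Coprime g m) : g ^ ordg g m ≡ 1 [MOD m] := by
  rw [← pow_zero g, pow_modEq_pow_iff h]
  simp [Nat.ModEq]

/-- If `x ≡ 1` modulo `b ^ n` with `n ≥ 1`, then `x ^ b ≡ 1` modulo `b ^ (n + 1)`. -/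
theorem pow_succ_dvd_pow_sub_one {b n : ℕ} (hn : 1 ≤ n) {x : ℤ} (hx : (b : ℤ) ^ n ∣ x - 1) :
    (b : ℤ) ^ (n + 1) ∣ x ^ b - 1 := by
  rw [← mul_geom_sum, mul_comm, pow_succ, mul_comm]
  refine mul_dvd_mul ?_ hx
  have hb : x ≡ 1 [ZMOD b] :=
    ((Int.modEq_iff_dvd).2 ((dvd_pow_self _ (by omega)).trans hx)).symm
  have hs : (∑ i ∈ Finset.range b, x ^ i) ≡ ∑ i ∈ Finset.range b, (1 : ℤ) ^ i [ZMOD b] := by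
    rw [Int.modEq_iff_dvd, ← Finset.sum_sub_distrib]
    exact Finset.dvd_sum fun i _ => (hb.pow i).dvd
  simpa using Int.modEq_zero_iff_dvd.1 (hs.trans (by simp [Int.ModEq]))

/-- A composite-modulus form of lifting the exponent. -/
theorem dvd_mul_of_dvd_pow_sub_one {b : ℕ} {x : ℤ} (hx : (b : ℤ) ^ 2 ∣ x - 1) {d m : ℕ}
    (hd : d ∣ b ^ m) {n : ℕ} (h : (d : ℤ) ∣ x ^ n - 1) : d ∣ (x - 1).natAbs * n := by
  rw [Nat.dvd_iff_prime_pow_dvd_dvd]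
  intro p k hp hpk
  rcases Nat.eq_zero_or_pos k with rfl | hk
  · simp
  have hpb : p ∣ b := hp.dvd_of_dvd_pow (((dvd_pow_self p hk.ne').trans hpk).trans hd)
  have hp2 : (p : ℤ) ^ 2 ∣ x - 1 := (pow_dvd_pow_of_dvd (Int.natCast_dvd_natCast.2 hpb) 2).trans hx
  have hp1 : (p : ℤ) ∣ x - 1 := (dvd_pow_self _ two_ne_zero).trans hp2
  have hpx : ¬ (p : ℤ) ∣ x := fun hc => by
    have h1 : (p : ℤ) ∣ 1 := by simpa using dvd_sub hc hp1
    exact hp.one_lt.ne' (by exact_mod_cast Int.eq_one_of_dvd_one (by positivity) h1)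
  have lte : emultiplicity (p : ℤ) (x ^ n - 1) =
      emultiplicity (p : ℤ) (x - 1) + emultiplicity (p : ℤ) (n : ℤ) := by
    rcases hp.eq_two_or_odd' with rfl | hodd
    · simpa using Int.two_pow_sub_pow' (x := x) (y := 1) n (by simpa using hp2) hpx
    · simpa [Int.natCast_emultiplicity] using
        Int.emultiplicity_pow_sub_pow hp hodd (x := x) (y := 1) hp1 hpx n
  rw [← emultiplicity_mul (Nat.prime_iff_prime_int.1 hp)] at lte
  have hk' : (p : ℤ) ^ k ∣ x ^ n - 1 :=
    (by exact_mod_cast hpk : (p : ℤ) ^ k ∣ (d : ℤ)).trans h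
  rw [pow_dvd_iff_le_emultiplicity, lte, ← pow_dvd_iff_le_emultiplicity] at hk'
  have := Int.natAbs_dvd_natAbs.2 hk'
  simpa [Int.natAbs_mul, Int.natAbs_pow] using this

section Order

variable {g b : ℕ}

theorem dvd_pow_ordg_sub_one (hbg : Nat.Coprime g b) (n : ℕ) :
    (b : ℤ) ^ n ∣ (g : ℤ) ^ ordg g (b ^ n) - 1 := by
  have := (pow_ordg_modEq_one (hbg.pow_right n)).symm
  rw [Nat.modEq_iff_dvd] at this
  exact_mod_cast this

theorem ordg_dvd {m n : ℕ} (h : Nat.Coprime g m) (hn : (m : ℤ) ∣ (g : ℤ) ^ n - 1) :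
    ordg g m ∣ n := by
  have h1 : g ^ n ≡ g ^ 0 [MOD m] := by
    refine Nat.ModEq.symm ?_
    rw [Nat.modEq_iff_dvd]
    simpa using hn
  exact Nat.modEq_zero_iff_dvd.1 ((pow_modEq_pow_iff h _ _).1 h1)

theorem ordg_pow_add_le (hb : 1 < b) (hbg : Nat.Coprime g b) {n : ℕ} (hn : 1 ≤ n) (t : ℕ) :
    ordg g (b ^ (n + t)) ≤ b ^ t * ordg g (b ^ n) := by
  induction t with
  | zero => simp
  | succ t ih =>
    have h := pow_succ_dvd_pow_sub_one (by omega) (dvd_pow_ordg_sub_one hbg (n + t))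
    rw [← pow_mul] at h
    have h' := ordg_dvd (hbg.pow_right (n + t + 1)) (by exact_mod_cast h)
    have hpos := ordg_pos (g := g) (m := b ^ (n + t)) (by positivity) (hbg.pow_right _)
    calc ordg g (b ^ (n + t + 1)) ≤ ordg g (b ^ (n + t)) * b :=
          Nat.le_of_dvd (by positivity) h'
      _ ≤ b ^ t * ordg g (b ^ n) * b := by gcongr
      _ = b ^ (t + 1) * ordg g (b ^ n) := by ring

theorem exists_ordg_pow_add_eq (hg : 2 ≤ g) (hb : 1 < b) (hbg : Nat.Coprime g b) :
    ∃ c, 0 < c ∧ ∀ t, 0 < t → ordg g (b ^ (c + t)) = b ^ t * ordg g (b ^ c) := by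
  set x : ℤ := (g : ℤ) ^ ordg g (b ^ 2) with hx
  have hx1 : (b : ℤ) ^ 2 ∣ x - 1 := dvd_pow_ordg_sub_one hbg 2
  have hopos (n : ℕ) : 0 < ordg g (b ^ n) := ordg_pos (by positivity) (hbg.pow_right _)
  have hK : 0 < (x - 1).natAbs := by
    have : (1 : ℤ) < x := one_lt_pow₀ (by exact_mod_cast hg) (hopos 2).ne'
    omega
  set K := (x - 1).natAbs
  have hdvd (n : ℕ) : b ^ (n + 2) ∣ K * ordg g (b ^ (n + 2)) := by
    refine dvd_mul_of_dvd_pow_sub_one hx1 dvd_rfl ?_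
    rw [hx, ← pow_mul, mul_comm, pow_mul]
    refine Dvd.dvd.trans ?_ (sub_one_dvd_pow_sub_one _ _)
    exact_mod_cast dvd_pow_ordg_sub_one hbg (n + 2)
  choose e he using hdvd
  obtain ⟨n, hn⟩ : ∃ n, ∀ m, e n ≤ e m :=
    ⟨Function.argmin e, fun m => Function.argmin_le e m⟩
  refine ⟨n + 2, by omega, fun t _ => le_antisymm (ordg_pow_add_le hb hbg (by omega) t) ?_⟩
  refine Nat.le_of_mul_le_mul_left ?_ hK
  calc K * (b ^ t * ordg g (b ^ (n + 2))) = b ^ t * (b ^ (n + 2) * e n) := by rw [← he]; ring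
    _ ≤ b ^ t * (b ^ (n + 2) * e (n + t)) := by gcongr; exact hn _
    _ = b ^ (n + t + 2) * e (n + t) := by ring
    _ = K * ordg g (b ^ (n + 2 + t)) := by rw [← he, show n + t + 2 = n + 2 + t by ring]

theorem ordg_pow_add_eq (hg : 2 ≤ g) (hb : 1 < b) (hbg : Nat.Coprime g b) {k : ℕ}
    (hk : cg g b ≤ k) (t : ℕ) : ordg g (b ^ (k + t)) = b ^ t * ordg g (b ^ k) := by
  have hc : ∀ t, ordg g (b ^ (cg g b + t)) = b ^ t * ordg g (b ^ cg g b) := fun t => by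
    rcases Nat.eq_zero_or_pos t with rfl | ht
    · simp
    · exact (Nat.sInf_mem (exists_ordg_pow_add_eq hg hb hbg)).2 t ht
  obtain ⟨d, rfl⟩ := Nat.exists_eq_add_of_le hk
  rw [add_assoc, hc, hc, pow_add]
  ring

end Order

/-- The remainders occurring over one period of the expansion of `a / m` in base `g`. -/
noncomputable def remainders (g a j m : ℕ) : Finset ℕ :=
  (Finset.Icc j (ordg g m + j - 1)).image fun i => a * g ^ i % m

section Remainders

variable {g a m : ℕ}

theorem injOn_remainder (hm : 0 < m) (hg : Nat.Coprime g m) (ha : Nat.Coprime a m) (j : ℕ) :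
    Set.InjOn (fun i => a * g ^ i % m) (Finset.Icc j (ordg g m + j - 1) : Finset ℕ) := by
  intro i hi i' hi' h
  simp only [Finset.coe_Icc, Set.mem_Icc] at hi hi'
  have hL := ordg_pos hm hg
  have h1 : g ^ i ≡ g ^ i' [MOD m] :=
    Nat.ModEq.cancel_left_of_coprime (by simpa using ha.symm) h
  rw [pow_modEq_pow_iff hg] at h1
  rcases le_total i i' with hle | hle
  · have h2 := (Nat.modEq_iff_dvd' hle).1 h1
    have := Nat.eq_zero_of_dvd_of_lt h2 (by omega)
    omega
  · have h2 := (Nat.modEq_iff_dvd' hle).1 h1.symm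
    have := Nat.eq_zero_of_dvd_of_lt h2 (by omega)
    omega

theorem card_remainders (hm : 0 < m) (hg : Nat.Coprime g m) (ha : Nat.Coprime a m) (j : ℕ) :
    (remainders g a j m).card = ordg g m := by
  rw [remainders, Finset.card_image_of_injOn (injOn_remainder hm hg ha j), Nat.card_Icc]
  have := ordg_pos hm hg
  omega

theorem mod_mem_remainders (hm : 0 < m) (hg : Nat.Coprime g m) {i j : ℕ} (hij : j ≤ i) :
    a * g ^ i % m ∈ remainders g a j m := by
  have hL := ordg_pos hm hg
  refine Finset.mem_image.2 ⟨j + (i - j) % ordg g m, ?_, ?_⟩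
  · have := Nat.mod_lt (i - j) hL
    rw [Finset.mem_Icc]
    omega
  · refine Nat.ModEq.mul_left a ((pow_modEq_pow_iff hg _ _).2 ?_)
    have h := (Nat.mod_modEq (i - j) (ordg g m)).add_left j
    rwa [Nat.add_sub_cancel' hij] at h

theorem lt_of_mem_remainders (hm : 0 < m) {j x : ℕ} (hx : x ∈ remainders g a j m) : x < m := by
  obtain ⟨i, -, rfl⟩ := Finset.mem_image.1 hx
  exact Nat.mod_lt _ hm

end Remainders

/-- If `G` divides `n` and is coprime to `m`, the last base-`G` digit of `n / m` is determined by
the remainder `n % m`. -/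
theorem div_mod_eq_iff {G m n s : ℕ} (hG : Nat.Coprime m G) (hn : G ∣ n) (hs : s < G) :
    n / m % G = s ↔ G ∣ m * s + n % m := by
  have h0 : m * (n / m) + n % m ≡ 0 [MOD G] := by
    rw [Nat.div_add_mod]
    exact Nat.modEq_zero_iff_dvd.2 hn
  have h1 : n / m % G = s ↔ n / m ≡ s [MOD G] := by
    rw [Nat.ModEq, Nat.mod_eq_of_lt hs]
  rw [h1, ← Nat.modEq_zero_iff_dvd]
  constructor
  · intro h
    exact ((h.mul_left m).add_right _).symm.trans h0
  · intro h
    exact Nat.ModEq.cancel_left_of_coprime (by simpa using hG.symm)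
      (Nat.ModEq.add_right_cancel' (n % m) (h0.trans h.symm))

theorem nu_eq_card_remainders {g b a j k s : ℕ} (hb : 0 < b) (hbg : Nat.Coprime b g) (hab : Nat.Coprime a b)
    (hs : s < g ^ j) :
    nu g b a j k s = {x ∈ remainders g a j (b ^ k) | g ^ j ∣ b ^ k * s + x}.card := by
  rw [remainders, Finset.filter_image, Finset.card_image_of_injOn]
  · refine congrArg Finset.card (Finset.filter_congr fun i hi => ?_)
    refine div_mod_eq_iff (hbg.pow k j) ?_ hs
    exact (pow_dvd_pow g (Finset.mem_Icc.1 hi).1).mul_left a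
  · refine (injOn_remainder (pow_pos hb k) (hbg.symm.pow_right k) (hab.pow_right k) j).mono ?_
    exact Finset.coe_subset.2 (Finset.filter_subset _ _)

/-- The number of `n ≤ G * w` in the residue class `c + m * n ≡ 0` modulo `G`. -/
theorem card_filter_dvd_add_mul {G m : ℕ} (hG : 2 ≤ G) (hm : Nat.Coprime m G) (c w : ℕ) :
    {n ∈ Finset.range (G * w + 1) | G ∣ c + m * n}.card = w + if G ∣ c then 1 else 0 := by
  obtain ⟨u, -, hu⟩ := Nat.exists_mul_mod_eq_one_of_coprime hm (by omega)
  have hu' : m * u ≡ 1 [MOD G] := by rw [Nat.ModEq, hu, Nat.mod_eq_of_lt (by omega)]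
  obtain ⟨v, hv⟩ : ∃ v, G ∣ c + m * v := by
    refine ⟨u * ((G - 1) * c), ?_⟩
    rw [← Nat.modEq_zero_iff_dvd, ← mul_assoc]
    calc c + m * u * ((G - 1) * c) ≡ c + 1 * ((G - 1) * c) [MOD G] :=
          (hu'.mul_right _).add_left _
      _ = G * c := by
          obtain ⟨r, rfl⟩ := Nat.exists_eq_add_of_le' hG
          simp only [Nat.reduceSubDiff]
          ring
      _ ≡ 0 [MOD G] := Nat.modEq_zero_iff_dvd.2 (dvd_mul_right _ _)
  have key (n : ℕ) : G ∣ c + m * n ↔ n ≡ v [MOD G] := by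
    rw [← Nat.modEq_zero_iff_dvd] at hv ⊢
    constructor
    · intro h
      exact Nat.ModEq.cancel_left_of_coprime (by simpa using hm.symm)
        (Nat.ModEq.add_left_cancel' c (h.trans hv.symm))
    · intro h
      exact ((h.mul_left m).add_left c).trans hv
  have h0 : G ∣ c ↔ v % G = 0 := by
    have := key 0
    simp only [mul_zero, add_zero] at this
    rw [this, Nat.ModEq, Nat.zero_mod, eq_comm]
  simp only [key]
  rw [← Nat.count_eq_card_filter_range, Nat.count_modEq_card _ (by omega),
    Nat.mul_add_mod, Nat.mod_eq_of_lt (by omega : 1 < G), Nat.mul_add_div (by omega),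
    Nat.div_eq_of_lt (by omega : 1 < G)]
  simp [h0]

/-- If the order grows by the full factor `d` from modulus `m` to `m * d`, the remainders modulo
`m * d` are exactly the lifts of the remainders modulo `m`. -/
theorem remainders_mul {g a m d : ℕ} (hm : 0 < m) (hd : 0 < d) (hg : Nat.Coprime g (m * d))
    (ha : Nat.Coprime a (m * d)) (hord : ordg g (m * d) = d * ordg g m) (j : ℕ) :
    remainders g a j (m * d) =
      (remainders g a j m ×ˢ Finset.range d).image fun p => p.1 + m * p.2 := by
  have hgm : Nat.Coprime g m := Nat.Coprime.coprime_mul_right_right hg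
  have ham : Nat.Coprime a m := Nat.Coprime.coprime_mul_right_right ha
  refine Finset.eq_of_subset_of_card_le ?_ ?_
  · intro x hx
    have hlt := lt_of_mem_remainders (by positivity) hx
    obtain ⟨i, hi, rfl⟩ := Finset.mem_image.1 hx
    refine Finset.mem_image.2 ⟨(a * g ^ i % (m * d) % m, a * g ^ i % (m * d) / m), ?_,
      Nat.mod_add_div _ _⟩
    rw [Finset.mem_product, Finset.mem_range, Nat.mod_mul_right_mod]
    exact ⟨mod_mem_remainders hm hgm (Finset.mem_Icc.1 hi).1, Nat.div_lt_of_lt_mul hlt⟩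
  · refine Finset.card_image_le.trans ?_
    rw [Finset.card_product, Finset.card_range, card_remainders hm hgm ham,
      card_remainders (by positivity) hg ha, hord, mul_comm]

theorem injOn_add_mul (g a j m d : ℕ) (hm : 0 < m) :
    Set.InjOn (fun p : ℕ × ℕ => p.1 + m * p.2)
      (remainders g a j m ×ˢ Finset.range d : Finset (ℕ × ℕ)) := by
  rintro ⟨r, n⟩ h ⟨r', n'⟩ h' heq
  simp only [Finset.coe_product, Set.mem_prod, Finset.mem_coe] at h h' heq
  have hr := lt_of_mem_remainders hm h.1
  have hr' := lt_of_mem_remainders hm h'.1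
  have h1 : r = r' := by
    simpa [Nat.add_mul_mod_self_left, Nat.mod_eq_of_lt hr, Nat.mod_eq_of_lt hr'] using
      congrArg (· % m) heq
  subst h1
  simpa [hm.ne'] using heq

/-- Raising the exponent by a multiple of the order of `b` modulo `g ^ j` shifts all the
frequencies by one and the same amount. -/
theorem nu_add {g b a j k s t w : ℕ} (hg : 2 ≤ g) (hb : 1 < b) (hbg : Nat.Coprime b g)
    (hab : Nat.Coprime a b) (hj : 1 ≤ j) (hk : cg g b ≤ k) (hw : b ^ t = g ^ j * w + 1)
    (hs : s < g ^ j) :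
    nu g b a j (k + t) s = nu g b a j k s + w * ordg g (b ^ k) := by
  have hm : 0 < b ^ k := by positivity
  have hG : 2 ≤ g ^ j := hg.trans (Nat.le_self_pow (by omega) g)
  have hcop (n : ℕ) : Nat.Coprime g (b ^ n) := hbg.symm.pow_right n
  have hdvd (x : ℕ) : g ^ j ∣ b ^ (k + t) * s + x ↔ g ^ j ∣ b ^ k * s + x := by
    have : b ^ (k + t) * s + x = g ^ j * (w * b ^ k * s) + (b ^ k * s + x) := by
      rw [pow_add, hw]
      ring
    rw [this, Nat.dvd_add_right (dvd_mul_right _ _)]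
  rw [nu_eq_card_remainders (by omega) hbg hab hs, nu_eq_card_remainders (by omega) hbg hab hs]
  simp only [hdvd]
  rw [pow_add, remainders_mul hm (by positivity) (by rw [← pow_add]; exact hcop _)
      (by rw [← pow_add]; exact hab.pow_right _)
      (by rw [← pow_add]; exact ordg_pow_add_eq hg hb hbg.symm hk t),
    Finset.filter_image, Finset.card_image_of_injOn
      ((injOn_add_mul g a j _ _ hm).mono (Finset.coe_subset.2 (Finset.filter_subset _ _))),
    Finset.card_filter, Finset.sum_product]
  have hr (r : ℕ) : (∑ n ∈ Finset.range (b ^ t),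
      if g ^ j ∣ b ^ k * s + (r + b ^ k * n) then 1 else 0) =
      w + if g ^ j ∣ b ^ k * s + r then 1 else 0 := by
    rw [← Finset.card_filter, hw]
    simp only [← add_assoc]
    exact card_filter_dvd_add_mul hG (hbg.pow k j) _ w
  rw [Finset.sum_congr rfl fun r _ => hr r, Finset.sum_add_distrib, ← Finset.card_filter,
    Finset.sum_const, card_remainders hm (hcop k) (hab.pow_right k), smul_eq_mul]
  ring

/-- For `k ≥ c_g(b)` and `t₀ = ord_b(g^j)` (the multiplicative order of
`b` modulo `g^j`), frequency differences are invariant: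
`ν_k(s) − ν_k(s') = ν_{k+t₀}(s) − ν_{k+t₀}(s')` for all `s, s' < g^j`. -/
theorem frequency_difference_invariant (g b a j k : ℕ) (hg : 2 ≤ g) (hb : 1 < b)
    (hbg : Nat.gcd b g = 1) (ha : 0 < a) (hab : Nat.gcd a b = 1) (hak : a < b ^ k)
    (hj : 1 ≤ j) (hk : cg g b ≤ k) :
    ∀ s : ℕ, s < g ^ j → ∀ s' : ℕ, s' < g ^ j →
      (nu g b a j k s : ℤ) - (nu g b a j k s' : ℤ)
        = (nu g b a j (k + ordg b (g ^ j)) s : ℤ)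
          - (nu g b a j (k + ordg b (g ^ j)) s' : ℤ) := by
  intro s hs s' hs'
  have hmod := pow_ordg_modEq_one (Nat.Coprime.pow_right j hbg)
  have hle : 1 ≤ b ^ ordg b (g ^ j) := Nat.one_le_pow _ _ (by omega)
  obtain ⟨w, hw⟩ := (Nat.modEq_iff_dvd' hle).1 hmod.symm
  have hw' : b ^ ordg b (g ^ j) = g ^ j * w + 1 := by omega
  rw [nu_add hg hb hbg hab hj hk hw' hs, nu_add hg hb hbg hab hj hk hw' hs']
  push_cast
  ring
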